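/- Let N ≥ M ≥ 1, let H ∈ ℂ^{N×M}, let h_k denote the k-th column of H and H_k the N×(M−1) matrix obtained from H by deleting the k-th column. Then for every α > 0 and every k ∈ {1,…,M}, the matrix I_M + α H^H H is invertible and 1/[(I_M + α H^H H)^{-1}]_{kk} − 1 = α · h_k^H (I_N + α H_k H_k^H)^{-1} h_k. -/

import Mathlib

open Matrix

/-!
By Cramer's rule the reciprocal of a diagonal entry of `A⁻¹` is `det A / det Aₖ`, where `Aₖ` is the
principal submatrix without row and column `k`. For `A = 1 + U V` the identity
`det (1 + U V) = det (1 + V U)` moves both determinants to the other side, where removing index `k`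
subtracts a rank-one matrix from `V U`. The matrix determinant lemma then evaluates the ratio.
-/

section Decomposition

variable {R l n : Type*}

theorem mul_eq_submatrix_succAbove_mul_add_vecMulVec [NonUnitalNonAssocSemiring R] {m : ℕ}
    (V : Matrix l (Fin (m + 1)) R) (U : Matrix (Fin (m + 1)) n R) (k : Fin (m + 1)) :
    V * U = V.submatrix id k.succAbove * U.submatrix k.succAbove id
      + vecMulVec (V.col k) (U.row k) := by
  ext i j
  simp only [mul_apply, Fin.sum_univ_succAbove _ k, Matrix.add_apply, submatrix_apply, id_eq,
    vecMulVec_apply, col_apply, row_apply, add_comm]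

theorem submatrix_one_add_mul [NonAssocSemiring R] [Fintype n] {m : Type*} [DecidableEq l]
    [DecidableEq m] (U : Matrix m n R) (V : Matrix n m R) {e : l → m} (he : Function.Injective e) :
    (1 + U * V).submatrix e e = 1 + U.submatrix e id * V.submatrix id e := by
  rw [← submatrix_mul U V e id e Function.bijective_id, ← submatrix_one e he]
  rfl

end Decomposition

section Determinant

variable {R : Type*} [CommRing R] {n : Type*} [Fintype n] [DecidableEq n]

theorem det_add_vecMulVec {A : Matrix n n R} (hA : IsUnit A) (u v : n → R) :
    (A + vecMulVec u v).det = A.det * (1 + v ⬝ᵥ A⁻¹ *ᵥ u) := by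
  rw [vecMulVec_eq Unit,
    det_add_replicateCol_mul_replicateRow ((isUnit_iff_isUnit_det A).mp hA), Matrix.mul_assoc,
    ← replicateCol_mulVec, det_unique (n := Unit), Matrix.add_apply, one_apply_eq,
    replicateRow_mul_replicateCol_apply]

theorem det_one_add_mul_eq_det_submatrix_succAbove_mul {m : ℕ} (U : Matrix (Fin (m + 1)) n R)
    (V : Matrix n (Fin (m + 1)) R) (k : Fin (m + 1))
    (hB : IsUnit (1 + V.submatrix id k.succAbove * U.submatrix k.succAbove id)) :
    (1 + U * V).det = ((1 + U * V).submatrix k.succAbove k.succAbove).det *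
      (1 + U.row k ⬝ᵥ
        (1 + V.submatrix id k.succAbove * U.submatrix k.succAbove id)⁻¹ *ᵥ V.col k) := by
  rw [submatrix_one_add_mul U V k.succAbove_right_injective, det_one_add_mul_comm U V,
    mul_eq_submatrix_succAbove_mul_add_vecMulVec V U k, ← add_assoc, det_add_vecMulVec hB,
    det_one_add_mul_comm (U.submatrix _ _)]

end Determinant

section InverseDiagonal

variable {K : Type*} [Field K]

theorem inv_apply_self_eq_det_submatrix_succAbove_div_det {m : ℕ}
    (A : Matrix (Fin (m + 1)) (Fin (m + 1)) K) (k : Fin (m + 1)) :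
    A⁻¹ k k = (A.submatrix k.succAbove k.succAbove).det / A.det := by
  rw [inv_def, Matrix.smul_apply, adjugate_fin_succ_eq_det_submatrix,
    Even.neg_one_pow ⟨(k : ℕ), rfl⟩, one_mul, Ring.inverse_eq_inv', smul_eq_mul, div_eq_inv_mul]

/-- When `1 + U * V` is singular, both sides are `-1`, the left one by the conventions `A⁻¹ = 0` and
`1 / 0 = 0`. -/
theorem one_div_inv_one_add_mul_apply_self_sub_one {n : Type*} [Fintype n] [DecidableEq n] {m : ℕ}
    (U : Matrix (Fin (m + 1)) n K) (V : Matrix n (Fin (m + 1)) K) (k : Fin (m + 1))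
    (hB : IsUnit (1 + V.submatrix id k.succAbove * U.submatrix k.succAbove id)) :
    1 / (1 + U * V : Matrix _ _ K)⁻¹ k k - 1 = U.row k ⬝ᵥ
      (1 + V.submatrix id k.succAbove * U.submatrix k.succAbove id)⁻¹ *ᵥ V.col k := by
  have minor_ne_zero : ((1 + U * V).submatrix k.succAbove k.succAbove).det ≠ 0 := by
    rw [submatrix_one_add_mul U V k.succAbove_right_injective, det_one_add_mul_comm]
    exact ((isUnit_iff_isUnit_det _).mp hB).ne_zero
  rw [inv_apply_self_eq_det_submatrix_succAbove_div_det, one_div_div,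
    det_one_add_mul_eq_det_submatrix_succAbove_mul U V k hB,
    mul_div_cancel_left₀ _ minor_ne_zero, add_sub_cancel_left]

end InverseDiagonal

section Gram

open scoped ComplexOrder

variable {𝕜 : Type*} [RCLike 𝕜] {n : Type*} [Fintype n]

theorem isUnit_one_add_smul_conjTranspose_mul_self {m : Type*} [Fintype m] [DecidableEq m]
    (G : Matrix n m 𝕜) {α : 𝕜} (hα : 0 ≤ α) : IsUnit (1 + α • (Gᴴ * G)) :=
  (PosDef.one.add_posSemidef ((posSemidef_conjTranspose_mul_self G).smul hα)).isUnit

theorem stmt_0_general [DecidableEq n] {m : ℕ} (H : Matrix n (Fin (m + 1)) 𝕜) {α : 𝕜} (hα : 0 ≤ α)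
    (k : Fin (m + 1)) :
    IsUnit (1 + α • (Hᴴ * H)) ∧
      1 / (1 + α • (Hᴴ * H) : Matrix _ _ 𝕜)⁻¹ k k - 1 =
        α * (star (H.col k) ⬝ᵥ
          (1 + α • (H.submatrix id k.succAbove * (H.submatrix id k.succAbove)ᴴ))⁻¹ *ᵥ
            H.col k) := by
  refine ⟨isUnit_one_add_smul_conjTranspose_mul_self H hα, ?_⟩
  have gram_eq : H.submatrix id k.succAbove * (α • Hᴴ).submatrix k.succAbove id =
      α • (H.submatrix id k.succAbove * (H.submatrix id k.succAbove)ᴴ) :=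
    Matrix.mul_smul _ α (H.submatrix id k.succAbove)ᴴ
  have row_eq : (α • Hᴴ).row k = α • star (H.col k) := rfl
  have gram_isUnit :
      IsUnit (1 + α • (H.submatrix id k.succAbove * (H.submatrix id k.succAbove)ᴴ)) := by
    simpa only [conjTranspose_conjTranspose] using
      isUnit_one_add_smul_conjTranspose_mul_self (H.submatrix id k.succAbove)ᴴ hα
  rw [← Matrix.smul_mul α Hᴴ H,
    one_div_inv_one_add_mul_apply_self_sub_one _ _ k (gram_eq ▸ gram_isUnit),
    gram_eq, row_eq, smul_dotProduct, smul_eq_mul]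

end Gram

/-- For `N ≥ M ≥ 1` (here `M = m+1`), `H ∈ ℂ^{N×M}`, `α > 0` and any column
index `k`, the matrix `I + α Hᴴ H` is invertible, and the MMSE SINR identity
`1/[(I + α Hᴴ H)⁻¹]_{kk} − 1 = α hₖᴴ (I + α Hₖ Hₖᴴ)⁻¹ hₖ` holds, where `hₖ` is the `k`-th
column of `H` and `Hₖ` is obtained from `H` by deleting the `k`-th column. -/
theorem stmt_0 (m N : ℕ) (hNM : m + 1 ≤ N)
    (H : Matrix (Fin N) (Fin (m + 1)) ℂ) (α : ℝ) (hα : 0 < α) (k : Fin (m + 1)) :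
    IsUnit (1 + (α : ℂ) • (Hᴴ * H)) ∧
      1 / (((1 + (α : ℂ) • (Hᴴ * H))⁻¹ : Matrix (Fin (m+1)) (Fin (m+1)) ℂ) k k) - 1 =
        (α : ℂ) *
          (star (fun i => H i k) ⬝ᵥ
            ((1 + (α : ℂ) • ((Matrix.of fun i (j : Fin m) => H i (k.succAbove j)) *
                (Matrix.of fun i (j : Fin m) => H i (k.succAbove j))ᴴ))⁻¹ *ᵥ
              fun i => H i k)) := by
  exact stmt_0_general H (Complex.zero_le_real.mpr hα.le) k
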